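/- Edge-count lower bound: Let r̲ : Fin n₁ → ℕ and c̲ : Fin n₂ → ℕ be non-increasing integer vectors and r̄ : Fin n₁ → ℕ, c̄ : Fin n₂ → ℕ integer vectors with r̲ ≤ r̄ and c̲ ≤ c̄ componentwise. Then every realization M of the four-tuple (r̲, r̄, c̲, c̄) has at least S_{n₂}(c̲) + max(0, δ₁) edges, where the number of edges of M is |{(i, j) : M i j}| and δ₁ = max over 1 ≤ j ≤ n₁ of (S_j(r̲) − S_j(c̲')) computed in the integers, c̲' being the conjugate of c̲ of length n₁. -/

import Mathlib

open Finset

/-- Degree of row vertex `i` in a bipartite graph given by biadjacency matrix `M`. -/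
def degU {n₁ n₂ : ℕ} (M : Fin n₁ → Fin n₂ → Bool) (i : Fin n₁) : ℕ :=
  (univ.filter fun j => M i j = true).card

/-- Degree of column vertex `j` in a bipartite graph given by biadjacency matrix `M`. -/
def degV {n₁ n₂ : ℕ} (M : Fin n₁ → Fin n₂ → Bool) (j : Fin n₂) : ℕ :=
  (univ.filter fun i => M i j = true).card

/-- `psum x k` = sum of the first `k` components of the vector `x`. -/
def psum {n : ℕ} (x : Fin n → ℕ) (k : ℕ) : ℕ :=
  ∑ i ∈ univ.filter (fun i : Fin n => (i : ℕ) < k), x i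

/-- `conj x i` = the `i`-th component (1-based) of the conjugate vector of `x`:
the number of indices `j` with `x j ≥ i`. -/
def conj {m : ℕ} (x : Fin m → ℕ) (i : ℕ) : ℕ :=
  (univ.filter fun j : Fin m => i ≤ x j).card

/-- The conjugate vector of `x`, taken with length `n`. -/
def conjVec (n : ℕ) {m : ℕ} (x : Fin m → ℕ) : Fin n → ℕ :=
  fun i => conj x ((i : ℕ) + 1)

/-- A pair `(r, c)` is bi-graphical if some biadjacency matrix realizes these
degrees exactly. -/
def BiGraphical {n₁ n₂ : ℕ} (r : Fin n₁ → ℕ) (c : Fin n₂ → ℕ) : Prop :=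
  ∃ M : Fin n₁ → Fin n₂ → Bool, (∀ i, degU M i = r i) ∧ (∀ j, degV M j = c j)

/-- `M` is a realization of the four-tuple `(rl, ru, cl, cu)`. -/
def IsRealization {n₁ n₂ : ℕ} (rl ru : Fin n₁ → ℕ) (cl cu : Fin n₂ → ℕ)
    (M : Fin n₁ → Fin n₂ → Bool) : Prop :=
  (∀ i, rl i ≤ degU M i ∧ degU M i ≤ ru i) ∧ (∀ j, cl j ≤ degV M j ∧ degV M j ≤ cu j)

/-- The four-tuple `(rl, ru, cl, cu)` is realizable. -/
def Realizable {n₁ n₂ : ℕ} (rl ru : Fin n₁ → ℕ) (cl cu : Fin n₂ → ℕ) : Prop :=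
  ∃ M, IsRealization rl ru cl cu M

/-- The number of edges of the bipartite graph given by `M`. -/
def edges {n₁ n₂ : ℕ} (M : Fin n₁ → Fin n₂ → Bool) : ℕ :=
  (univ.filter fun p : Fin n₁ × Fin n₂ => M p.1 p.2 = true).card

/-- `max (0, δ₁)` where `δ₁ = max over 1 ≤ j ≤ n₁ of (S_j(rl) - S_j(cl'))`
computed in the integers, `cl'` being the conjugate of `cl` of length `n₁`. -/
def delta1 {n₁ n₂ : ℕ} (rl : Fin n₁ → ℕ) (cl : Fin n₂ → ℕ) : ℕ :=
  (Finset.Icc 1 n₁).sup fun j =>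
    ((psum rl j : ℤ) - (psum (conjVec n₁ cl) j : ℤ)).toNat

/-!
Let `s` consist of the first `k` rows and compare the two sides column by column. A column of
degree `d`, of which `e` edges lie in `s`, has `e ≤ min k d`; if `d` is at least the prescribed
lower bound `c`, then `c + e ≤ d + min k c`, according to whether `c ≤ k` or `k ≤ c`. Summing over
the columns turns `d` into the number of edges, `e` into the degrees of the first `k` rows, and
`min k c` into the first `k` components of the conjugate of the column bounds.
-/

section Counting

variable {n₁ n₂ : ℕ} (M : Fin n₁ → Fin n₂ → Bool)

theorem sum_degU_eq_sum_card_filter (s : Finset (Fin n₁)) :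
    ∑ i ∈ s, degU M i = ∑ j, #{i ∈ s | M i j} :=
  sum_card_bipartiteAbove_eq_sum_card_bipartiteBelow fun i j => M i j = true

theorem edges_eq_sum_degV : edges M = ∑ j, degV M j := by
  simp only [edges, degV, card_filter]
  exact Fintype.sum_prod_type_right _

end Counting

theorem psum_self {n : ℕ} (x : Fin n → ℕ) : psum x n = ∑ i, x i := by
  simp only [psum, Fin.is_lt, filter_true]

theorem psum_mono {n : ℕ} {x y : Fin n → ℕ} (h : x ≤ y) (k : ℕ) : psum x k ≤ psum y k :=
  sum_le_sum fun i _ => h i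

theorem psum_conjVec {n m k : ℕ} (hk : k ≤ n) (x : Fin m → ℕ) :
    psum (conjVec n x) k = ∑ j, min k (x j) := by
  let rows : Finset (Fin n) := {i | (i : ℕ) < k}
  have card_filter_rows (j : Fin m) : #{i ∈ rows | i.val + 1 ≤ x j} = min k (x j) := by
    simp only [rows, filter_filter, Nat.succ_le_iff, ← lt_min_iff, Fin.card_filter_val_lt]
    exact min_eq_right (min_le_of_left_le hk)
  calc psum (conjVec n x) k
      = ∑ i ∈ rows, #{j | i.val + 1 ≤ x j} := rfl
    _ = ∑ j, #{i ∈ rows | i.val + 1 ≤ x j} :=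
        sum_card_bipartiteAbove_eq_sum_card_bipartiteBelow fun (i : Fin n) j => i.val + 1 ≤ x j
    _ = ∑ j, min k (x j) := sum_congr rfl fun j _ => card_filter_rows j

theorem add_card_filter_le_card_filter_add_min {α : Type*} [Fintype α] (p : α → Prop)
    [DecidablePred p] (s : Finset α) {c : ℕ} (hc : c ≤ #{a | p a}) :
    c + #{a ∈ s | p a} ≤ #{a | p a} + min #s c := by
  have in_s : #{a ∈ s | p a} ≤ #s := card_filter_le s p
  have in_univ : #{a ∈ s | p a} ≤ #{a | p a} := card_le_card (filter_subset_filter p s.subset_univ)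
  omega

theorem sum_add_sum_degU_le_edges_add_sum_min {n₁ n₂ : ℕ} {M : Fin n₁ → Fin n₂ → Bool}
    {c : Fin n₂ → ℕ} (hc : c ≤ degV M) (s : Finset (Fin n₁)) :
    ∑ j, c j + ∑ i ∈ s, degU M i ≤ edges M + ∑ j, min #s (c j) := by
  rw [sum_degU_eq_sum_card_filter, edges_eq_sum_degV, ← sum_add_distrib, ← sum_add_distrib]
  exact sum_le_sum fun j _ => add_card_filter_le_card_filter_add_min (M · j = true) s (hc j)

theorem psum_add_psum_le_edges_add_psum_conjVec {n₁ n₂ k : ℕ} {r : Fin n₁ → ℕ} {c : Fin n₂ → ℕ}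
    {M : Fin n₁ → Fin n₂ → Bool} (hr : r ≤ degU M) (hc : c ≤ degV M) (hk : k ≤ n₁) :
    psum c n₂ + psum r k ≤ edges M + psum (conjVec n₁ c) k := by
  let rows : Finset (Fin n₁) := {i | (i : ℕ) < k}
  have card_rows : #rows = k := by rw [Fin.card_filter_val_lt, min_eq_right hk]
  calc psum c n₂ + psum r k
      ≤ psum c n₂ + psum (degU M) k := by gcongr; exact psum_mono hr k
    _ = ∑ j, c j + ∑ i ∈ rows, degU M i := by rw [psum_self, psum]
    _ ≤ edges M + ∑ j, min #rows (c j) := sum_add_sum_degU_le_edges_add_sum_min hc rows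
    _ = edges M + ∑ j, min k (c j) := by rw [card_rows]
    _ = edges M + psum (conjVec n₁ c) k := by rw [psum_conjVec hk]

theorem add_delta1_le {n₁ n₂ a b : ℕ} {r : Fin n₁ → ℕ} {c : Fin n₂ → ℕ}
    (h : ∀ k ≤ n₁, a + psum r k ≤ b + psum (conjVec n₁ c) k) : a + delta1 r c ≤ b := by
  -- The `0` in `max (0, δ₁)` is the difference of the empty partial sums.
  have a_le_b : a ≤ b := by simpa [psum] using h 0 n₁.zero_le
  have delta1_le : delta1 r c ≤ b - a := by
    refine Finset.sup_le fun k hk => ?_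
    have psum_le := h k (mem_Icc.1 hk).2
    omega
  omega

theorem edges_lower_bound_general {n₁ n₂ : ℕ} {r : Fin n₁ → ℕ} {c : Fin n₂ → ℕ}
    {M : Fin n₁ → Fin n₂ → Bool} (hr : r ≤ degU M) (hc : c ≤ degV M) :
    psum c n₂ + delta1 r c ≤ edges M :=
  add_delta1_le fun _ hk => psum_add_psum_le_edges_add_psum_conjVec hr hc hk

/-- Edge-count lower bound for every realization. -/
theorem edges_lower_bound {n₁ n₂ : ℕ} (rl ru : Fin n₁ → ℕ) (cl cu : Fin n₂ → ℕ)
    (hrl : Antitone rl) (hcl : Antitone cl) (hr : rl ≤ ru) (hc : cl ≤ cu)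
    (M : Fin n₁ → Fin n₂ → Bool) (hM : IsRealization rl ru cl cu M) :
    psum cl n₂ + delta1 rl cl ≤ edges M :=
  edges_lower_bound_general (fun i => (hM.1 i).1) fun j => (hM.2 j).1
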